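/- Let A₁ ∈ ℝ^{n×n}, A₂ ∈ ℝ^{n×N}, A_s ∈ ℝ^{N×n}, B ∈ ℝ^{n×m}, Ā₁ = A₁ + A₂·A_s, and let Q : ℝⁿ → ℝᴺ. Let the disturbance-free data satisfy X₁ = Ā₁·X₀ + A₂·Q₀ + B·U₀, and let G₁ ∈ ℝ^{T×n}, G₂ ∈ ℝ^{T×N} satisfy X₀·G₁ = I_n, Q₀·G₁ = 0, X₀·G₂ = 0, Q₀·G₂ = I_N; set K₁ = U₀·G₁ and K₂ = U₀·G₂. Let F ∈ ℝ^{s×n}, g ∈ ℝ^s, λ ∈ (0,1]. Suppose there exist P_s ∈ ℝ^{s×s} with all entries nonnegative and l ∈ ℝ^s such that: (i) P_s·F = F·X₁·G₁; (ii) for every x with F·x ≤ g, F·X₁·G₂·Q(x) ≤ l componentwise; and (iii) P_s·g ≤ λ·g − l componentwise. Then for every x with F·x ≤ g, F·((Ā₁ + B·K₁)·x + (A₂ + B·K₂)·Q(x)) ≤ λ·g componentwise; i.e., the safe set S(F,g) is λ-contractive (hence robustly invariant) under the controller u = K₁x + K₂Q(x). -/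

import Mathlib

open Matrix

/-!
Since `[X₀; Q₀] * [G₁ G₂] = 1`, multiplying the data equation by `G₁` and `G₂` eliminates the
unknown model: the closed loop is `x ↦ (X₁ * G₁) *ᵥ x + (X₁ * G₂) *ᵥ Q x`. A nonnegative matrix `P`
with `P * F = F * (X₁ * G₁)` then serves as a Farkas certificate for the linear part: it turns
`F *ᵥ x ≤ g` into `F *ᵥ ((X₁ * G₁) *ᵥ x) ≤ P *ᵥ g`. The remainder term costs at most `l`, and
`P *ᵥ g + l ≤ lam • g`.
-/

section ClosedLoop

variable {R m n p q τ : Type*} [Semiring R] [Fintype m] [Fintype n] [Fintype p] [Fintype τ]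
  [DecidableEq n]

theorem closedLoop_eq_data_mul {A : Matrix q n R} {D : Matrix q p R} {B : Matrix q m R}
    {X : Matrix n τ R} {Y : Matrix p τ R} {U : Matrix m τ R} {Z : Matrix q τ R}
    {G : Matrix τ n R} (hdata : Z = A * X + D * Y + B * U) (hX : X * G = 1) (hY : Y * G = 0) :
    A + B * (U * G) = Z * G := by
  simp only [hdata, Matrix.add_mul, Matrix.mul_assoc, hX, hY, Matrix.mul_one, Matrix.mul_zero,
    add_zero]

end ClosedLoop

section Polyhedron

variable {R n ι κ : Type*} [Semiring R] [PartialOrder R] [Fintype n]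

/-- The polyhedral safe set `S(F, g)` of the points satisfying the componentwise inequalities
`F *ᵥ x ≤ g`; it need be neither bounded nor nonempty. -/
def safeSet (F : Matrix ι n R) (g : ι → R) : Set (n → R) :=
  {x | F *ᵥ x ≤ g}

/-- `lam`-contractivity of the safe set `S(F, g)` under the dynamics `x⁺ = f x`, encoded as `f`
mapping `S(F, g)` into `S(F, lam • g)`. The factor `lam` is not restricted to `(0, 1]`. -/
def IsContractive (F : Matrix ι n R) (g : ι → R) (lam : R) (f : (n → R) → n → R) : Prop :=
  Set.MapsTo f (safeSet F g) (safeSet F (lam • g))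

variable [IsOrderedRing R] [Fintype ι]

theorem mulVec_monotone_of_nonneg {P : Matrix κ ι R} (hP : ∀ i j, 0 ≤ P i j) :
    Monotone (P *ᵥ ·) :=
  fun _ _ huv i ↦ dotProduct_le_dotProduct_of_nonneg_left huv (hP i)

theorem safeSet_subset_safeSet_mul (F : Matrix ι n R) (g : ι → R) {P : Matrix κ ι R}
    (hP : ∀ i j, 0 ≤ P i j) : safeSet F g ⊆ safeSet (P * F) (P *ᵥ g) := by
  intro x hx
  change (P * F) *ᵥ x ≤ P *ᵥ g
  rw [← mulVec_mulVec]
  exact mulVec_monotone_of_nonneg hP hx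

theorem mapsTo_safeSet_of_nonneg {p : Type*} [Fintype p] {F : Matrix ι n R} {g : ι → R}
    {H : Matrix κ p R} {h l : κ → R} {M : Matrix p n R} {φ : (n → R) → p → R}
    {P : Matrix κ ι R} (hP : ∀ i j, 0 ≤ P i j) (hPF : P * F = H * M)
    (hφ : ∀ x ∈ safeSet F g, H *ᵥ φ x ≤ l) (hPg : P *ᵥ g + l ≤ h) :
    Set.MapsTo (fun x ↦ M *ᵥ x + φ x) (safeSet F g) (safeSet H h) := by
  intro x hx
  have hlinear : (H * M) *ᵥ x ≤ P *ᵥ g := hPF ▸ safeSet_subset_safeSet_mul F g hP hx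
  calc
    H *ᵥ (M *ᵥ x + φ x) = (H * M) *ᵥ x + H *ᵥ φ x := by rw [mulVec_add, mulVec_mulVec]
    _ ≤ P *ᵥ g + l := add_le_add hlinear (hφ x hx)
    _ ≤ h := hPg

end Polyhedron

theorem data_based_safe_control_nonlinearity_minimization_general
    {R m n p τ ι : Type*} [Ring R] [PartialOrder R] [IsOrderedRing R]
    [Fintype m] [Fintype n] [Fintype p] [Fintype τ] [Fintype ι] [DecidableEq n] [DecidableEq p]
    {Abar : Matrix n n R} {A₂ : Matrix n p R} {B : Matrix n m R} {Q : (n → R) → p → R}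
    {U₀ : Matrix m τ R} {X₀ X₁ : Matrix n τ R} {Q₀ : Matrix p τ R}
    (hdata : X₁ = Abar * X₀ + A₂ * Q₀ + B * U₀)
    {G₁ : Matrix τ n R} {G₂ : Matrix τ p R}
    (hX₀G₁ : X₀ * G₁ = 1) (hQ₀G₁ : Q₀ * G₁ = 0) (hX₀G₂ : X₀ * G₂ = 0) (hQ₀G₂ : Q₀ * G₂ = 1)
    {F : Matrix ι n R} {g l : ι → R} {lam : R}
    {P : Matrix ι ι R} (hP : ∀ i j, 0 ≤ P i j) (hPF : P * F = F * (X₁ * G₁))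
    (hQ : ∀ x ∈ safeSet F g, F *ᵥ ((X₁ * G₂) *ᵥ Q x) ≤ l) (hPg : P *ᵥ g ≤ lam • g - l) :
    IsContractive F g lam
      fun x ↦ (Abar + B * (U₀ * G₁)) *ᵥ x + (A₂ + B * (U₀ * G₂)) *ᵥ Q x := by
  have hdata' : X₁ = A₂ * Q₀ + Abar * X₀ + B * U₀ := by rw [hdata, add_comm (Abar * X₀)]
  rw [closedLoop_eq_data_mul hdata hX₀G₁ hQ₀G₁, closedLoop_eq_data_mul hdata' hQ₀G₂ hX₀G₂]
  exact mapsTo_safeSet_of_nonneg hP hPF hQ (le_sub_iff_add_le.mp hPg)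

/-- Theorem 1, disturbance-free case: data-based sufficient
conditions for `λ`-contractivity of the polyhedral safe set under the
controller `u = K₁x + K₂Q(x)`. -/
theorem data_based_safe_control_nonlinearity_minimization
    (n N m T s : ℕ)
    (A₁ : Matrix (Fin n) (Fin n) ℝ) (A₂ : Matrix (Fin n) (Fin N) ℝ)
    (As : Matrix (Fin N) (Fin n) ℝ) (B : Matrix (Fin n) (Fin m) ℝ)
    (Abar : Matrix (Fin n) (Fin n) ℝ) (hAbar : Abar = A₁ + A₂ * As)
    (Q : (Fin n → ℝ) → (Fin N → ℝ))
    (U₀ : Matrix (Fin m) (Fin T) ℝ)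
    (X₀ X₁ : Matrix (Fin n) (Fin T) ℝ)
    (Q₀ : Matrix (Fin N) (Fin T) ℝ)
    (hdata : X₁ = Abar * X₀ + A₂ * Q₀ + B * U₀)
    (G₁ : Matrix (Fin T) (Fin n) ℝ) (G₂ : Matrix (Fin T) (Fin N) ℝ)
    (hG11 : X₀ * G₁ = 1) (hG21 : Q₀ * G₁ = 0)
    (hG12 : X₀ * G₂ = 0) (hG22 : Q₀ * G₂ = 1)
    (K₁ : Matrix (Fin m) (Fin n) ℝ) (hK₁ : K₁ = U₀ * G₁)
    (K₂ : Matrix (Fin m) (Fin N) ℝ) (hK₂ : K₂ = U₀ * G₂)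
    (F : Matrix (Fin s) (Fin n) ℝ) (g : Fin s → ℝ)
    (lam : ℝ) (hlam : 0 < lam ∧ lam ≤ 1)
    (Ps : Matrix (Fin s) (Fin s) ℝ) (hPs : ∀ i j, 0 ≤ Ps i j)
    (l : Fin s → ℝ)
    (h1 : Ps * F = F * (X₁ * G₁))
    (h2 : ∀ x : Fin n → ℝ, F *ᵥ x ≤ g → F *ᵥ ((X₁ * G₂) *ᵥ Q x) ≤ l)
    (h3 : Ps *ᵥ g ≤ lam • g - l) :
    ∀ x : Fin n → ℝ, F *ᵥ x ≤ g →
      F *ᵥ ((Abar + B * K₁) *ᵥ x + (A₂ + B * K₂) *ᵥ Q x) ≤ lam • g := by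
  subst hK₁ hK₂
  exact data_based_safe_control_nonlinearity_minimization_general
    hdata hG11 hG21 hG12 hG22 hPs h1 h2 h3
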